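/- For every ε > 0 there exists an fiid labelling f : X → (V → Fin 5) of the 6-regular tree T_6 (where the labels 0, 1, 2, 3 are colors and the label 4 is 'red') such that for μ-a.e. x ∈ X: for every vertex v with f(x)(v) ≠ 4 and every neighbour u of v one has f(x)(u) ≠ f(x)(v); and for every vertex v, μ({x : f(x)(v) = 4}) ≤ ε. -/

import Mathlib

open MeasureTheory

/-! Call a conflicted vertex stuck if no recolouring of the ball of radius `3n` around it lowers the
number of conflicts. With `q` colours and degree `d ≤ 2q - 2`, every vertex that has a conflict has
some other colour on at most one neighbour, so the conflict of a stuck vertex can be pushed like a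
token along a path, reaching vertices at distances `0, …, n`. Tokens of different stuck vertices
never meet, since otherwise a recolouring would be profitable; by mass transport, stuck vertices
have density at most `1 / (n + 1)`.

An improvable vertex, on the other hand, is recoloured profitably with positive probability when
the vertices selected by fresh noise, if far enough apart, recolour the balls around them at random
and keep only the changes that lower the number of conflicts. A factor of iid whose expected number
of conflicts is nearly minimal therefore has few improvable vertices, hence few conflicted ones, and
these are coloured red. -/

namespace TreeColouring

section Tree

variable {V : Type*} {G : SimpleGraph V}

/-- The vertices closer to `a` than to `b`. If `a` and `b` are adjacent vertices of a tree, this is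
the component of `a` once the edge `ab` is deleted. -/
def side (G : SimpleGraph V) (a b : V) : Set V :=
  {y | G.dist y a < G.dist y b}

lemma mem_side {a b y : V} : y ∈ side G a b ↔ G.dist y a < G.dist y b :=
  Iff.rfl

lemma left_mem_side {a b : V} (h : G.Adj a b) : a ∈ side G a b := by
  simp [mem_side, SimpleGraph.dist_eq_one_iff_adj.2 h]

lemma right_notMem_side (a b : V) : b ∉ side G a b := by
  simp [mem_side]

lemma eq_of_adj_of_mem_side (hG : G.Connected) {a b y : V} (hy : G.Adj b y)
    (h : y ∈ side G a b) : y = a := by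
  rw [mem_side, SimpleGraph.dist_eq_one_iff_adj.2 hy.symm] at h
  exact hG.dist_eq_zero_iff.1 (Nat.lt_one_iff.1 h)

lemma dist_of_mem_side (hT : G.IsTree) {a b y : V} (h : G.Adj a b) (hy : y ∈ side G a b) :
    G.dist y b = G.dist y a + 1 := by
  have := hT.dist_eq_dist_add_one_of_adj y h
  rw [mem_side] at hy
  omega

lemma mem_side_or_mem_side (hT : G.IsTree) {a b : V} (h : G.Adj a b) (y : V) :
    y ∈ side G a b ∨ y ∈ side G b a :=
  lt_or_gt_of_ne (hT.dist_ne_of_adj y h)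

lemma disjoint_side (hT : G.IsTree) {a a' b : V} (ha : G.Adj a b) (ha' : G.Adj a' b)
    (hne : a ≠ a') : Disjoint (side G a b) (side G a' b) := by
  refine Set.disjoint_left.2 fun y hy hy' => hne ?_
  have isPath_concat {x : V} (hx : G.Adj x b) (hxy : y ∈ side G x b) (p : G.Walk y x)
      (hp : p.length = G.dist y x) : (p.concat hx).IsPath :=
    SimpleGraph.Walk.isPath_of_length_eq_dist _ <| by
      rw [SimpleGraph.Walk.length_concat, hp, dist_of_mem_side hT hx hxy]
  obtain ⟨p, hp⟩ := hT.connected.exists_walk_length_eq_dist y a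
  obtain ⟨p', hp'⟩ := hT.connected.exists_walk_length_eq_dist y a'
  exact (SimpleGraph.Walk.concat_inj <| (hT.existsUnique_path y b).unique
    (isPath_concat ha hy p hp) (isPath_concat ha' hy' p' hp')).1

lemma side_subset_side (hT : G.IsTree) {x a b : V} (hx : G.Adj x a) (hb : G.Adj a b)
    (hne : x ≠ b) : side G x a ⊆ side G a b := fun y hy =>
  (mem_side_or_mem_side hT hb y).resolve_right
    (Set.disjoint_left.1 (disjoint_side hT hx hb.symm hne) hy)

lemma exists_adj_mem_side (hT : G.IsTree) {y b : V} (hne : y ≠ b) :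
    ∃ a, G.Adj a b ∧ y ∈ side G a b := by
  obtain ⟨p, hp⟩ := hT.connected.exists_walk_length_eq_dist b y
  cases p with
  | nil => exact absurd rfl hne
  | @cons _ a _ h q =>
    refine ⟨a, h.symm, ?_⟩
    have := SimpleGraph.dist_le q
    rw [SimpleGraph.Walk.length_cons] at hp
    rw [mem_side, G.dist_comm (u := y) (v := b), G.dist_comm]
    omega

open Classical in
/-- The closed ball of radius `n` around `v` as a finset. -/
noncomputable def closedBall (G : SimpleGraph V) [G.LocallyFinite] : ℕ → V → Finset V
  | 0, v => {v}
  | n + 1, v => closedBall G n v ∪ (closedBall G n v).biUnion fun w => G.neighborFinset w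

lemma mem_closedBall [G.LocallyFinite] (hT : G.IsTree) {n : ℕ} {v w : V} :
    w ∈ closedBall G n v ↔ G.dist v w ≤ n := by
  induction n generalizing w with
  | zero =>
    rw [closedBall, Finset.mem_singleton, Nat.le_zero, hT.connected.dist_eq_zero_iff, eq_comm]
  | succ n ih =>
    simp only [closedBall, Finset.mem_union, Finset.mem_biUnion, SimpleGraph.mem_neighborFinset, ih]
    constructor
    · rintro (h | ⟨a, h, ha⟩)
      · exact h.trans n.le_succ
      · have := hT.dist_eq_dist_add_one_of_adj v ha
        omega
    · intro h
      rcases eq_or_ne v w with rfl | hne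
      · exact Or.inl (by simp)
      · obtain ⟨a, ha, hva⟩ := exists_adj_mem_side hT hne
        have := dist_of_mem_side hT ha hva
        exact Or.inr ⟨a, by omega, ha⟩

lemma dist_iso (hG : G.Connected) (φ : G ≃g G) (u v : V) : G.dist (φ u) (φ v) = G.dist u v := by
  have dist_map_le (ψ : G ≃g G) (u v : V) : G.dist (ψ u) (ψ v) ≤ G.dist u v := by
    obtain ⟨p, hp⟩ := hG.exists_walk_length_eq_dist u v
    rw [← hp, ← p.length_map ψ.toHom]
    exact SimpleGraph.dist_le _
  refine (dist_map_le φ u v).antisymm ?_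
  simpa only [RelIso.symm_apply_apply] using dist_map_le φ.symm (φ u) (φ v)

end Tree

section Symmetry

variable {V : Type*} {G : SimpleGraph V}

lemma exists_tree_recursion (hT : G.IsTree) (o : V) {α : V → Type*} (start : α o)
    (step : ∀ x y, G.Adj x y → α x → α y) :
    ∃ f : ∀ v, α v, f o = start ∧
      ∀ x y (h : G.Adj x y), o ∈ side G x y → f y = step x y h (f x) := by
  classical
  choose parent hadj hside using fun (y : V) (h : o ≠ y) => exists_adj_mem_side hT h
  let F (y : V) (ih : ∀ x, G.dist o x < G.dist o y → α x) : α y :=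
    if h : o = y then h ▸ start else step _ _ (hadj y h) (ih (parent y h) (hside y h))
  let f : ∀ v, α v := (measure (G.dist o)).wf.fix F
  have f_eq (y : V) : f y = F y fun x _ => f x := (measure (G.dist o)).wf.fix_eq F y
  refine ⟨f, by rw [f_eq]; simp [F], fun x y h hx => ?_⟩
  have hne : o ≠ y := by
    rintro rfl
    exact right_notMem_side x o hx
  obtain rfl : parent y hne = x := by
    by_contra hxy
    exact Set.disjoint_left.1 (disjoint_side hT (hadj y hne) h hxy) (hside y hne) hx
  rw [f_eq]
  simp [F, hne]

/-- A proper edge colouring in which every vertex sees every colour exactly once: `e v i` is the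
neighbour of `v` along the edge of colour `i`. -/
def IsEdgeColouring {ι : Type*} (e : ∀ v, ι ≃ G.neighborSet v) : Prop :=
  ∀ v i, (e (e v i) i : V) = v

lemma exists_isEdgeColouring (hT : G.IsTree) {ι : Type*}
    (hι : ∀ v, Nonempty (ι ≃ G.neighborSet v)) :
    ∃ e : ∀ v, ι ≃ G.neighborSet v, IsEdgeColouring e := by
  classical
  obtain ⟨o⟩ := hT.connected.nonempty
  let e₀ v := (hι v).some
  obtain ⟨e, -, he⟩ := exists_tree_recursion hT o (e₀ o) fun x y h t =>
    (Equiv.swap ((e₀ y).symm ⟨x, h.symm⟩) (t.symm ⟨y, h⟩)).trans (e₀ y)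
  have colour_eq_of_side (x y : V) (h : G.Adj x y) (hx : o ∈ side G x y) :
      (e x).symm ⟨y, h⟩ = (e y).symm ⟨x, h.symm⟩ := by
    rw [Equiv.eq_symm_apply, he x y h hx, Equiv.trans_apply, Equiv.swap_apply_right,
      Equiv.apply_symm_apply]
  have colour_eq (x y : V) (h : G.Adj x y) : (e x).symm ⟨y, h⟩ = (e y).symm ⟨x, h.symm⟩ :=
    (mem_side_or_mem_side hT h o).elim (colour_eq_of_side x y h)
      fun hy => (colour_eq_of_side y x h.symm hy).symm
  refine ⟨e, fun v i => ?_⟩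
  have := colour_eq v (e v i) (e v i).2
  rw [Subtype.coe_eta, Equiv.symm_apply_apply, Equiv.eq_symm_apply] at this
  exact congrArg Subtype.val this

/-- Maps of the vertices that send an edge of colour `i` to an edge of colour `i`. -/
def PreservesColours {ι : Type*} (e : ∀ v, ι ≃ G.neighborSet v) (ψ : V → V) : Prop :=
  ∀ v i, ψ (e v i) = e (ψ v) i

section PreservesColours

variable {ι : Type*} {e : ∀ v, ι ≃ G.neighborSet v} {ψ ψ' : V → V}

lemma exists_preservesColours (hT : G.IsTree) (he : IsEdgeColouring e) (u v : V) :
    ∃ ψ, PreservesColours e ψ ∧ ψ u = v := by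
  obtain ⟨ψ, hu, hψ⟩ := exists_tree_recursion hT u v fun x y h t => e t ((e x).symm ⟨y, h⟩)
  refine ⟨ψ, fun x i => ?_, hu⟩
  rcases mem_side_or_mem_side hT (e x i).2 u with h | h
  · rw [hψ x (e x i) (e x i).2 h, Subtype.coe_eta, Equiv.symm_apply_apply]
  · have hback : (e (e x i)).symm ⟨x, (e x i).2.symm⟩ = i := by
      rw [Equiv.symm_apply_eq]
      exact Subtype.ext (he x i).symm
    rw [hψ (e x i) x (e x i).2.symm h, hback, he]

lemma PreservesColours.adj (h : PreservesColours e ψ) {x y : V} (hxy : G.Adj x y) :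
    G.Adj (ψ x) (ψ y) := by
  obtain ⟨i, hi⟩ := (e x).surjective ⟨y, hxy⟩
  rw [show y = e x i by rw [hi], h]
  exact (e (ψ x) i).2

lemma PreservesColours.comp (h : PreservesColours e ψ) (h' : PreservesColours e ψ') :
    PreservesColours e (ψ ∘ ψ') := fun v i => by
  rw [Function.comp_apply, h' v i, h (ψ' v) i, Function.comp_apply]

lemma PreservesColours.eq_of_eq_at (hG : G.Connected) (h : PreservesColours e ψ)
    (h' : PreservesColours e ψ') {o : V} (ho : ψ o = ψ' o) : ψ = ψ' := by
  funext x
  obtain ⟨p⟩ := hG o x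
  induction p with
  | nil => exact ho
  | @cons u v _ huv _ ih =>
    obtain ⟨i, hi⟩ := (e u).surjective ⟨v, huv⟩
    refine ih ?_
    rw [show v = e u i by rw [hi], h, h', ho]

end PreservesColours

lemma exists_simplyTransitive_isos (hT : G.IsTree) {ι : Type*}
    (hι : ∀ v, Nonempty (ι ≃ G.neighborSet v)) (o : V) :
    ∃ Φ : V → (G ≃g G), (∀ v, Φ v o = v) ∧ ∀ v, Φ ((Φ v).symm o) = (Φ v).symm := by
  obtain ⟨e, he⟩ := exists_isEdgeColouring hT hι
  choose ψ hψ hψ_apply using fun u v => exists_preservesColours hT he u v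
  have ψ_cancel (u v x : V) : ψ u v (ψ v u x) = x :=
    congrFun (((hψ u v).comp (hψ v u)).eq_of_eq_at hT.connected (ψ' := id) (fun _ _ => rfl)
      (by simp only [Function.comp_apply, hψ_apply, id] : (ψ u v ∘ ψ v u) v = id v)) x
  let Φ (v : V) : G ≃g G :=
    { toFun := ψ o v
      invFun := ψ v o
      left_inv := ψ_cancel v o
      right_inv := ψ_cancel o v
      map_rel_iff' := fun {x y} =>
        ⟨fun h => by simpa only [Equiv.coe_fn_mk, ψ_cancel] using (hψ v o).adj h, (hψ o v).adj⟩ }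
  refine ⟨Φ, hψ_apply o, fun v => RelIso.ext fun x => congrFun ?_ x⟩
  exact (hψ o (ψ v o o)).eq_of_eq_at hT.connected (hψ v o) (hψ_apply o _)

open scoped ENNReal in
lemma tsum_eq_tsum_swap_of_invariant (hT : G.IsTree) {ι : Type*}
    (hι : ∀ v, Nonempty (ι ≃ G.neighborSet v)) (m : V → V → ℝ≥0∞)
    (hm : ∀ (φ : G ≃g G) u v, m (φ u) (φ v) = m u v) (o : V) :
    ∑' w, m o w = ∑' w, m w o := by
  obtain ⟨Φ, hΦ, hΦ_symm⟩ := exists_simplyTransitive_isos hT hι o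
  have involutive : Function.Involutive fun w => (Φ w).symm o := fun w => by
    simp only [hΦ_symm, RelIso.symm_symm, hΦ]
  rw [← involutive.toPerm.tsum_eq fun w => m w o]
  refine tsum_congr fun w => ?_
  rw [← hm (Φ w).symm o w]
  congr 1
  rw [RelIso.symm_apply_eq, hΦ]

end Symmetry

section Conflicts

variable {V K : Type*} {G : SimpleGraph V} [G.LocallyFinite]

open Classical in
/-- The number of neighbours of `b` of colour `k`. -/
noncomputable def colourCount (G : SimpleGraph V) [G.LocallyFinite] (c : V → K) (b : V) (k : K) :
    ℕ :=
  ∑ y ∈ G.neighborFinset b, if c y = k then 1 else 0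

/-- The number of neighbours of `w` with the same colour as `w`. -/
noncomputable def conflicts (G : SimpleGraph V) [G.LocallyFinite] (c : V → K) (w : V) : ℕ :=
  colourCount G c w (c w)

/-- The number of conflicts in the ball of radius `R + 1` around `v`. Changing colours in the ball
of radius `R` affects no other conflicts. -/
noncomputable def energy (G : SimpleGraph V) [G.LocallyFinite] (c : V → K) (v : V) (R : ℕ) : ℕ :=
  ∑ w ∈ closedBall G (R + 1) v, conflicts G c w

/-- Some recolouring of the ball of radius `R` around `v` lowers the energy. -/
def Improvable (G : SimpleGraph V) [G.LocallyFinite] (c : V → K) (v : V) (R : ℕ) : Prop :=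
  ∃ g : V → K, (∀ y, R < G.dist v y → g y = c y) ∧ energy G g v R < energy G c v R

lemma colourCount_congr {c g : V → K} {b : V} (h : ∀ y, G.Adj b y → c y = g y) (k : K) :
    colourCount G c b k = colourCount G g b k :=
  Finset.sum_congr rfl fun y hy => by rw [h y ((G.mem_neighborFinset b y).1 hy)]

lemma conflicts_congr {c g : V → K} {w : V} (hw : c w = g w) (h : ∀ y, G.Adj w y → c y = g y) :
    conflicts G c w = conflicts G g w := by
  rw [conflicts, conflicts, hw, colourCount_congr h]

lemma colourCount_eq_card (c : V → K) (b : V) (k : K) [DecidablePred fun y => c y = k] :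
    colourCount G c b k = ((G.neighborFinset b).filter fun y => c y = k).card := by
  rw [Finset.card_filter, colourCount]
  congr! 2

lemma colourCount_pos_iff {c : V → K} {b : V} {k : K} :
    0 < colourCount G c b k ↔ ∃ y, G.Adj b y ∧ c y = k := by
  classical
  simp only [colourCount_eq_card, Finset.card_pos, Finset.Nonempty, Finset.mem_filter,
    SimpleGraph.mem_neighborFinset]

lemma colourCount_le_one {c : V → K} {b b' : V} {k : K} (h : ∀ y, G.Adj b y → c y = k → y = b') :
    colourCount G c b k ≤ 1 := by
  classical
  rw [colourCount_eq_card]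
  refine Finset.card_le_one.2 fun x hx y hy => ?_
  simp only [Finset.mem_filter, SimpleGraph.mem_neighborFinset] at hx hy
  rw [h x hx.1 hx.2, h y hy.1 hy.2]

lemma colourCount_le_degree (c : V → K) (b : V) (k : K) : colourCount G c b k ≤ G.degree b := by
  classical
  rw [colourCount_eq_card]
  exact Finset.card_filter_le _ _

lemma sum_colourCount [Fintype K] (c : V → K) (b : V) : ∑ k, colourCount G c b k = G.degree b := by
  classical
  simp only [colourCount_eq_card]
  exact (Finset.card_eq_sum_card_fiberwise fun _ _ => Finset.mem_univ _).symm

lemma exists_ne_colourCount_le_one [Fintype K] {b : V} (hK : G.degree b + 2 ≤ 2 * Fintype.card K)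
    {c : V → K} {j : K} (hj : 0 < colourCount G c b j) : ∃ k ≠ j, colourCount G c b k ≤ 1 := by
  classical
  by_contra! hcon
  have two_mul_le : 2 * (Fintype.card K - 1) ≤ ∑ k ∈ Finset.univ.erase j, colourCount G c b k := by
    rw [← Finset.card_univ, ← Finset.card_erase_of_mem (Finset.mem_univ j), mul_comm]
    exact Finset.card_nsmul_le_sum _ _ 2 fun k hk => hcon k (Finset.ne_of_mem_erase hk)
  have hsum := sum_colourCount (G := G) c b
  rw [← Finset.add_sum_erase _ _ (Finset.mem_univ j)] at hsum
  omega

section Update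

open Function

variable [DecidableEq V]

lemma conflicts_update_self (c : V → K) (b : V) (k : K) :
    conflicts G (update c b k) b = colourCount G c b k := by
  rw [conflicts, update_self]
  exact colourCount_congr (fun y hy => update_of_ne hy.ne' _ _) k

lemma conflicts_update_of_not_adj (c : V → K) {b w : V} (k : K) (hw : w ≠ b) (h : ¬ G.Adj b w) :
    conflicts G (update c b k) w = conflicts G c w := by
  refine conflicts_congr (update_of_ne hw _ _) fun y hy => update_of_ne ?_ _ _
  rintro rfl
  exact h hy.symm

lemma conflicts_update_of_adj [DecidableEq K] (c : V → K) {b w : V} (k : K) (h : G.Adj b w) :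
    conflicts G (update c b k) w + (if c w = c b then 1 else 0)
      = conflicts G c w + if c w = k then 1 else 0 := by
  have hb : b ∈ G.neighborFinset w := (G.mem_neighborFinset w b).2 h.symm
  have away : ∑ y ∈ (G.neighborFinset w).erase b, (if update c b k y = c w then 1 else 0)
      = ∑ y ∈ (G.neighborFinset w).erase b, if c y = c w then 1 else 0 :=
    Finset.sum_congr rfl fun y hy => by rw [update_of_ne (Finset.ne_of_mem_erase hy)]
  rw [conflicts, conflicts, update_of_ne h.ne', colourCount_eq_card, colourCount_eq_card,
    Finset.card_filter, Finset.card_filter, ← Finset.sum_erase_add _ _ hb,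
    ← Finset.sum_erase_add _ _ hb, away, update_self]
  simp only [eq_comm (a := c w)]
  ring

lemma energy_update (hT : G.IsTree) (c : V → K) {v b : V} {R : ℕ} (hb : G.dist v b ≤ R) (k : K) :
    energy G (update c b k) v R + 2 * colourCount G c b (c b)
      = energy G c v R + 2 * colourCount G c b k := by
  classical
  have pointwise (w : V) : conflicts G (update c b k) w
        + (if w = b then colourCount G c b (c b) else 0)
        + (if w ∈ G.neighborFinset b then if c w = c b then 1 else 0 else 0)
      = conflicts G c w + (if w = b then colourCount G c b k else 0)
        + if w ∈ G.neighborFinset b then if c w = k then 1 else 0 else 0 := by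
    rcases eq_or_ne w b with rfl | hw
    · rw [conflicts_update_self]
      simp [conflicts, add_comm]
    · by_cases h : G.Adj b w
      · simpa [hw, h] using conflicts_update_of_adj c k h
      · simp [hw, h, conflicts_update_of_not_adj c k hw h]
  have hb_mem : b ∈ closedBall G (R + 1) v := (mem_closedBall hT).2 (by omega)
  have inter_eq : closedBall G (R + 1) v ∩ G.neighborFinset b = G.neighborFinset b :=
    Finset.inter_eq_right.2 fun y hy => by
      have := hT.dist_eq_dist_add_one_of_adj v ((G.mem_neighborFinset b y).1 hy)
      rw [mem_closedBall hT]
      omega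
  have hsum := Finset.sum_congr (rfl : closedBall G (R + 1) v = _) fun w _ => pointwise w
  simp only [Finset.sum_add_distrib, Finset.sum_ite_eq', hb_mem, if_true, Finset.sum_ite_mem,
    inter_eq] at hsum
  rw [← colourCount, ← colourCount] at hsum
  rw [energy, energy]
  omega

end Update

lemma colourCount_le_of_not_improvable (hT : G.IsTree) {c g : V → K} {v b : V} {R : ℕ}
    (hc : ¬ Improvable G c v R) (hg : ∀ y, R < G.dist v y → g y = c y)
    (hE : energy G g v R ≤ energy G c v R) (hb : G.dist v b ≤ R) (k : K) :
    colourCount G g b (g b) ≤ colourCount G g b k := by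
  classical
  by_contra hlt
  refine hc ⟨Function.update g b k, fun y hy => ?_, ?_⟩
  · rw [Function.update_of_ne (by rintro rfl; omega), hg y hy]
  · have := energy_update hT g hb k
    omega

end Conflicts

section TokenPaths

variable {V K : Type*} {G : SimpleGraph V}

/-- `TokenPath G c v k a b`: the conflict between `v` and a neighbour can be pushed along a path
of length `k` to the edge `ab`, starting at `v = b` with the neighbour `a`. When the conflict sits
on `ab`, the vertex `b` takes the colour of `b'`, its only neighbour of that colour apart
from `a`, so that the conflict moves to `bb'`. -/
inductive TokenPath (G : SimpleGraph V) (c : V → K) (v : V) : ℕ → V → V → Prop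
  | start {a : V} (hadj : G.Adj a v) (hc : c a = c v) : TokenPath G c v 0 a v
  | push {k : ℕ} {a b b' : V} (h : TokenPath G c v k a b) (hadj : G.Adj b b') (hne : b' ≠ a)
      (hc : c b' ≠ c b) (huniq : ∀ y, G.Adj b y → y ≠ a → c y = c b' → y = b') :
      TokenPath G c v (k + 1) b b'

namespace TokenPath

variable {c : V → K} {v : V} {k : ℕ} {a b : V}

lemma adj (h : TokenPath G c v k a b) : G.Adj a b := by
  cases h <;> assumption

lemma mem_side_of_adj (hT : G.IsTree) (h : TokenPath G c v k a b) {b' : V} (hadj : G.Adj b b')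
    (hne : b' ≠ a) : v ∈ side G b b' := by
  induction h generalizing b' with
  | start => exact left_mem_side hadj
  | push _ hadj' hne' _ _ ih => exact side_subset_side hT hadj' hadj hne.symm (ih hadj' hne')

lemma dist_eq (hT : G.IsTree) (h : TokenPath G c v k a b) : G.dist v b = k := by
  induction h with
  | start => exact G.dist_self
  | push h hadj hne _ _ ih => rw [dist_of_mem_side hT hadj (h.mem_side_of_adj hT hadj hne), ih]

variable [G.LocallyFinite]

-- Recolouring the path step by step never raises the energy: each new colour costs at most one
-- conflict, and the old one had the pushed conflict.
lemma exists_pushed (hT : G.IsTree) {v₀ : V} {R : ℕ} (h : TokenPath G c v k a b)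
    (hR : G.dist v₀ v + k ≤ R + 1) {g : V → K} (hg : Set.EqOn g c (insert b (side G a b))) :
    ∃ g' : V → K, Set.EqOn g' g (side G a b)ᶜ ∧ (∀ y, R < G.dist v₀ y → g' y = g y) ∧
      g' a = c b ∧ energy G g' v₀ R ≤ energy G g v₀ R := by
  classical
  induction h with
  | @start a hadj hc =>
    refine ⟨g, fun _ _ => rfl, fun _ _ => rfl, ?_, le_rfl⟩
    rw [hg (Set.mem_insert_of_mem _ (left_mem_side hadj)), hc]
  | @push k x a b h hadj hne hc huniq ih =>
    have side_sub : side G x a ⊆ side G a b := side_subset_side hT h.adj hadj hne.symm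
    have ha : a ∈ side G a b := left_mem_side hadj
    have ha_dist : G.dist v₀ a ≤ R := by
      have := hT.connected.dist_triangle (u := v₀) (v := v) (w := a)
      have := h.dist_eq hT
      omega
    obtain ⟨g₁, hg₁, hg₁_far, hg₁_x, hg₁_energy⟩ := ih (by omega) <| hg.mono <|
      Set.insert_subset (Set.mem_insert_of_mem _ ha) (side_sub.trans (Set.subset_insert _ _))
    have hg₁_a : g₁ a = c a := by
      rw [hg₁ (right_notMem_side x a), hg (Set.mem_insert_of_mem _ ha)]
    have hg₁_adj (y : V) (hy : G.Adj a y) (hyx : y ≠ x) : g₁ y = c y := by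
      rw [hg₁ fun hmem => hyx (eq_of_adj_of_mem_side hT.connected hy hmem)]
      by_cases hyb : y = b
      · exact hg (Or.inl hyb)
      · exact hg (Or.inr (side_subset_side hT hy.symm hadj hyb (left_mem_side hy.symm)))
    have count_old : 0 < colourCount G g₁ a (g₁ a) :=
      colourCount_pos_iff.2 ⟨x, h.adj.symm, by rw [hg₁_x, hg₁_a]⟩
    have count_new : colourCount G g₁ a (c b) ≤ 1 := colourCount_le_one fun y hy hyc => by
      have hyx : y ≠ x := by
        rintro rfl
        exact hc (by rw [← hyc, hg₁_x])
      exact huniq y hy hyx (by rw [← hg₁_adj y hy hyx, hyc])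
    refine ⟨Function.update g₁ a (c b), fun y hy => ?_, fun y hy => ?_, Function.update_self .., ?_⟩
    · rw [Function.update_of_ne (by rintro rfl; exact hy ha), hg₁ fun hmem => hy (side_sub hmem)]
    · rw [Function.update_of_ne (by rintro rfl; omega), hg₁_far y hy]
    · have := energy_update hT g₁ ha_dist (c b)
      omega

variable [Fintype K] {R : ℕ}

lemma exists_push (hT : G.IsTree) (hK : ∀ v, G.degree v + 2 ≤ 2 * Fintype.card K)
    (hc : ¬ Improvable G c v R) (h : TokenPath G c v k a b) (hk : k ≤ R) :
    ∃ b', TokenPath G c v (k + 1) b b' := by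
  classical
  obtain ⟨g, hg, hg_far, hg_a, hg_energy⟩ :=
    h.exists_pushed hT (v₀ := v) (R := R) (by simp; omega) (Set.eqOn_refl c _)
  have hg_b : g b = c b := hg (right_notMem_side a b)
  have hg_adj (y : V) (hy : G.Adj b y) (hya : y ≠ a) : g y = c y :=
    hg fun hmem => hya (eq_of_adj_of_mem_side hT.connected hy hmem)
  have count_old : 0 < colourCount G g b (g b) :=
    colourCount_pos_iff.2 ⟨a, h.adj.symm, by rw [hg_a, hg_b]⟩
  obtain ⟨j, hj, hj_count⟩ := exists_ne_colourCount_le_one (hK b) count_old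
  have count_j : colourCount G g b j = 1 := hj_count.antisymm <| count_old.trans_le <|
    colourCount_le_of_not_improvable hT hc hg_far hg_energy (by rwa [h.dist_eq hT]) j
  rw [colourCount_eq_card] at count_j
  obtain ⟨b', hb'⟩ := Finset.card_eq_one.1 count_j
  have mem_iff (y : V) : G.Adj b y ∧ g y = j ↔ y = b' := by
    simpa only [Finset.mem_filter, SimpleGraph.mem_neighborFinset, Finset.mem_singleton] using
      Finset.ext_iff.1 hb' y
  obtain ⟨hadj, hgb'⟩ := (mem_iff b').2 rfl
  have hne : b' ≠ a := by
    rintro rfl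
    exact hj (by rw [← hgb', hg_a, hg_b])
  have hcb' : c b' = j := by rw [← hg_adj b' hadj hne, hgb']
  refine ⟨b', h.push hadj hne (by rwa [hcb', ← hg_b]) fun y hy hya hyc => (mem_iff y).1 ⟨hy, ?_⟩⟩
  rw [hg_adj y hy hya, hyc, hcb']

-- If two tokens came to `b` from different neighbours, pushing both would give `b` two conflicts,
-- and recolouring `b` would then gain a conflict.
lemma left_unique (hT : G.IsTree) (hK : ∀ v, G.degree v + 2 ≤ 2 * Fintype.card K)
    (hc : ¬ Improvable G c v R) (h : TokenPath G c v k a b) {v' a' : V} {k' : ℕ}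
    (h' : TokenPath G c v' k' a' b) (hR : k + 2 * k' ≤ R) : a = a' := by
  classical
  by_contra hne
  have hdisj := disjoint_side hT h.adj h'.adj hne
  have hb := h.dist_eq hT
  have hv' : G.dist v v' ≤ k + k' := by
    have := hT.connected.dist_triangle (u := v) (v := b) (w := v')
    rwa [G.dist_comm (u := b), hb, h'.dist_eq hT] at this
  obtain ⟨g, hg, hg_far, hg_a, hg_energy⟩ :=
    h.exists_pushed hT (v₀ := v) (R := R) (by simp; omega) (Set.eqOn_refl c _)
  obtain ⟨g', hg', hg'_far, hg'_a', hg'_energy⟩ :=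
    h'.exists_pushed hT (v₀ := v) (R := R) (by omega) <| hg.mono <|
      Set.insert_subset (right_notMem_side a b) hdisj.subset_compl_left
  have hg'_b : g' b = c b := by rw [hg' (right_notMem_side a' b), hg (right_notMem_side a b)]
  have hg'_a : g' a = c b := by
    rw [hg' (hdisj.notMem_of_mem_left (left_mem_side h.adj)), hg_a]
  have two_le : 2 ≤ colourCount G g' b (g' b) := by
    rw [colourCount_eq_card, ← Finset.card_pair hne]
    refine Finset.card_le_card <| Finset.insert_subset ?_ <| Finset.singleton_subset_iff.2 ?_ <;>
      simp [h.adj.symm, h'.adj.symm, hg'_a, hg'_a', hg'_b]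
  obtain ⟨j, -, hj⟩ := exists_ne_colourCount_le_one (hK b) (Nat.zero_lt_of_lt two_le)
  have := colourCount_le_of_not_improvable hT hc (g := g') (b := b)
    (fun y hy => by rw [hg'_far y hy, hg_far y hy]) (hg'_energy.trans hg_energy) (by omega) j
  omega

lemma source_unique (hT : G.IsTree) (hK : ∀ v, G.degree v + 2 ≤ 2 * Fintype.card K)
    (hc : ¬ Improvable G c v R) (h : TokenPath G c v k a b) {v' a' : V} {k' : ℕ}
    (h' : TokenPath G c v' k' a' b) (hR : k + 2 * k' ≤ R) : v = v' := by
  induction h generalizing v' k' a' with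
  | start hadj hca =>
    obtain rfl := (start hadj hca).left_unique hT hK hc h' hR
    cases h' with
    | start => rfl
    | push _ _ _ hne => exact absurd hca.symm hne
  | push h hadj hne hca huniq ih =>
    obtain rfl := (h.push hadj hne hca huniq).left_unique hT hK hc h' hR
    cases h' with
    | start _ heq => exact absurd heq.symm hca
    | push h' => exact ih h' (by omega)

end TokenPath

variable [G.LocallyFinite] [Fintype K] {c : V → K} {v : V}

/-- Some token path of length at most `n` from `v` ends at `w`. -/
def Reaches (G : SimpleGraph V) (c : V → K) (n : ℕ) (v w : V) : Prop :=
  ∃ k ≤ n, ∃ a, TokenPath G c v k a w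

lemma exists_tokenPath (hT : G.IsTree) (hK : ∀ v, G.degree v + 2 ≤ 2 * Fintype.card K) {R : ℕ}
    (hc : ¬ Improvable G c v R) (hv : 0 < conflicts G c v) {k : ℕ} (hk : k ≤ R) :
    ∃ a b, TokenPath G c v k a b := by
  induction k with
  | zero =>
    obtain ⟨a, ha, hca⟩ := colourCount_pos_iff.1 hv
    exact ⟨a, v, .start ha.symm hca⟩
  | succ k ih =>
    obtain ⟨a, b, h⟩ := ih (by omega)
    exact ⟨b, h.exists_push hT hK hc (by omega)⟩

open Classical in
lemma lt_card_reaches (hT : G.IsTree) (hK : ∀ v, G.degree v + 2 ≤ 2 * Fintype.card K) {n R : ℕ}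
    (hc : ¬ Improvable G c v R) (hv : 0 < conflicts G c v) (hn : n ≤ R) :
    n < ((closedBall G n v).filter (Reaches G c n v)).card := by
  rw [Nat.lt_iff_add_one_le, ← Finset.card_range (n + 1)]
  refine Finset.card_le_card_of_surjOn (G.dist v) fun k hk => ?_
  have hkn : k ≤ n := Nat.lt_succ_iff.1 (Finset.mem_range.1 hk)
  obtain ⟨a, b, h⟩ := exists_tokenPath hT hK hc hv (hkn.trans hn)
  refine ⟨b, ?_, h.dist_eq hT⟩
  rw [Finset.mem_coe, Finset.mem_filter, mem_closedBall hT, h.dist_eq hT]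
  exact ⟨hkn, k, hkn, a, h⟩

lemma Reaches.source_unique (hT : G.IsTree) (hK : ∀ v, G.degree v + 2 ≤ 2 * Fintype.card K)
    {n : ℕ} {v' w : V} (hc : ¬ Improvable G c v (3 * n)) (h : Reaches G c n v w)
    (h' : Reaches G c n v' w) : v = v' := by
  obtain ⟨k, hk, a, h⟩ := h
  obtain ⟨k', hk', a', h'⟩ := h'
  exact h.source_unique hT hK hc h' (by omega)

end TokenPaths

section Recolouring

variable {V K : Type*} {G : SimpleGraph V}

open Classical in
/-- The colouring `c`, replaced by `q` in the ball of radius `R` around `v`. -/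
noncomputable def recolourBall (G : SimpleGraph V) (R : ℕ) (c q : V → K) (v y : V) : K :=
  if G.dist v y ≤ R then q y else c y

/-- A proposal `p` gives every vertex a new colour and decides whether it is a candidate centre.
The candidate `v` is active if no other candidate is near and adopting the proposed colours in the
ball of radius `R` around `v` lowers the energy. -/
def Active (G : SimpleGraph V) [G.LocallyFinite] (R : ℕ) (c : V → K) (p : V → K × Bool) (v : V) :
    Prop :=
  (p v).2 = true ∧ (∀ u ≠ v, G.dist v u ≤ 2 * R + 3 → (p u).2 = false) ∧
    energy G (recolourBall G R c (fun y => (p y).1) v) v R < energy G c v R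

open Classical in
/-- The colouring obtained from `c` by adopting the proposed colours in all balls of radius `R`
around active vertices. -/
noncomputable def recolour (G : SimpleGraph V) [G.LocallyFinite] (R : ℕ) (c : V → K)
    (p : V → K × Bool) (y : V) : K :=
  if ∃ v, Active G R c p v ∧ G.dist v y ≤ R then (p y).1 else c y

open Classical in
/-- Mass transport in which each active vertex `v` collects the conflicts of `g` in the ball of
radius `R + 1` around it. -/
noncomputable def collected (G : SimpleGraph V) [G.LocallyFinite] (R : ℕ) (c : V → K)
    (p : V → K × Bool) (g : V → K) (v w : V) : ENNReal :=
  if Active G R c p v ∧ G.dist v w ≤ R + 1 then conflicts G g w else 0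

variable [G.LocallyFinite] {R : ℕ} {c : V → K} {p : V → K × Bool} {v v' w y : V}

lemma Active.eq_of_dist_le (hG : G.Connected) (h : Active G R c p v) (h' : Active G R c p v')
    {i j : ℕ} (hv : G.dist v y ≤ i) (hv' : G.dist v' y ≤ j) (hij : i + j ≤ 2 * R + 3) :
    v' = v := by
  by_contra hne
  have near : G.dist v v' ≤ 2 * R + 3 := by
    have := hG.dist_triangle (u := v) (v := y) (w := v')
    rw [G.dist_comm (u := y)] at this
    omega
  simpa [h'.1] using h.2.1 v' hne near

lemma recolour_eq_recolourBall (hG : G.Connected) (h : Active G R c p v)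
    (hy : G.dist v y ≤ R + 2) :
    recolour G R c p y = recolourBall G R c (fun y => (p y).1) v y := by
  classical
  refine if_congr ⟨fun ⟨v', h', hv'⟩ => ?_, fun hd => ⟨v, h, hd⟩⟩ rfl rfl
  rwa [← h.eq_of_dist_le hG h' hy hv' (by omega)]

lemma recolour_eq_self (h : ∀ v, Active G R c p v → R < G.dist v y) : recolour G R c p y = c y :=
  if_neg fun ⟨v, hv, hd⟩ => (h v hv).not_ge hd

lemma energy_recolour (hT : G.IsTree) (h : Active G R c p v) :
    energy G (recolour G R c p) v R = energy G (recolourBall G R c (fun y => (p y).1) v) v R := by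
  refine Finset.sum_congr rfl fun w hw => ?_
  rw [mem_closedBall hT] at hw
  refine conflicts_congr (recolour_eq_recolourBall hT.connected h (by omega)) fun y hy =>
    recolour_eq_recolourBall hT.connected h ?_
  have := hT.dist_eq_dist_add_one_of_adj v hy
  omega

lemma conflicts_recolour_of_far (hT : G.IsTree) (h : ∀ v, Active G R c p v → R + 1 < G.dist v w) :
    conflicts G (recolour G R c p) w = conflicts G c w := by
  refine conflicts_congr (recolour_eq_self fun v hv => (Nat.lt_succ_self R).trans (h v hv))
    fun y hy => recolour_eq_self fun v hv => ?_
  have := h v hv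
  have := hT.dist_eq_dist_add_one_of_adj v hy
  omega

lemma tsum_collected (hT : G.IsTree) (R : ℕ) (c : V → K) (p : V → K × Bool) (g : V → K) (v : V)
    [Decidable (Active G R c p v)] :
    ∑' w, collected G R c p g v w = if Active G R c p v then (energy G g v R : ENNReal) else 0 := by
  split_ifs with h
  · have outside (w : V) (hw : w ∉ closedBall G (R + 1) v) : collected G R c p g v w = 0 :=
      if_neg fun hc => hw ((mem_closedBall hT).2 hc.2)
    rw [tsum_eq_sum outside, energy, Nat.cast_sum]
    exact Finset.sum_congr rfl fun w hw => if_pos ⟨h, (mem_closedBall hT).1 hw⟩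
  · exact ENNReal.tsum_eq_zero.2 fun w => if_neg fun hc => h hc.1

open Classical in
lemma tsum_collected_swap (hG : G.Connected) (R : ℕ) (c : V → K) (p : V → K × Bool) (g : V → K)
    (w : V) : ∑' v, collected G R c p g v w =
      if ∃ v, Active G R c p v ∧ G.dist v w ≤ R + 1 then (conflicts G g w : ENNReal) else 0 := by
  split_ifs with h
  · obtain ⟨v, hv, hd⟩ := h
    have other (v' : V) (hne : v' ≠ v) : collected G R c p g v' w = 0 :=
      if_neg fun h' => hne (hv.eq_of_dist_le hG h'.1 hd h'.2 (by omega))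
    rw [tsum_eq_single v other]
    exact if_pos ⟨hv, hd⟩
  · exact ENNReal.tsum_eq_zero.2 fun v => if_neg fun hv => h ⟨v, hv⟩

lemma conflicts_recolour_add_tsum_collected (hT : G.IsTree) (R : ℕ) (c : V → K) (p : V → K × Bool)
    (w : V) :
    (conflicts G (recolour G R c p) w : ENNReal) + ∑' v, collected G R c p c v w =
      conflicts G c w + ∑' v, collected G R c p (recolour G R c p) v w := by
  rw [tsum_collected_swap hT.connected, tsum_collected_swap hT.connected]
  split_ifs with h
  · exact add_comm _ _
  · push Not at h
    rw [conflicts_recolour_of_far hT h]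

open Classical in
lemma tsum_collected_recolour_add_le (hT : G.IsTree) (R : ℕ) (c : V → K) (p : V → K × Bool)
    (v : V) :
    ∑' w, collected G R c p (recolour G R c p) v w + (if Active G R c p v then 1 else 0) ≤
      ∑' w, collected G R c p c v w := by
  rw [tsum_collected hT, tsum_collected hT]
  split_ifs with h
  · rw [energy_recolour hT h]
    exact_mod_cast h.2.2
  · rw [add_zero]

lemma tsum_collected_swap_le (hG : G.Connected) (R : ℕ) (c : V → K) (p : V → K × Bool)
    (g : V → K) (w : V) : ∑' v, collected G R c p g v w ≤ conflicts G g w := by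
  classical
  rw [tsum_collected_swap hG]
  split_ifs
  · exact le_rfl
  · exact zero_le

end Recolouring

section Equivariance

variable {V K : Type*} {G : SimpleGraph V}

lemma TokenPath.comp_iso (φ : G ≃g G) {c : V → K} {v : V} {k : ℕ} {a b : V}
    (h : TokenPath G (c ∘ φ) v k a b) : TokenPath G c (φ v) k (φ a) (φ b) := by
  induction h with
  | start hadj hc => exact .start (φ.map_adj_iff.2 hadj) hc
  | push _ hadj hne hc huniq ih =>
    refine .push ih (φ.map_adj_iff.2 hadj) (φ.injective.ne hne) hc ?_
    refine (φ.toEquiv.forall_congr fun y => ?_).1 huniq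
    exact imp_congr φ.map_adj_iff.symm <| imp_congr φ.injective.ne_iff.symm <|
      imp_congr Iff.rfl φ.injective.eq_iff.symm

lemma reaches_comp_iso (φ : G ≃g G) (c : V → K) (n : ℕ) (v w : V) :
    Reaches G (c ∘ φ) n v w ↔ Reaches G c n (φ v) (φ w) := by
  have mpr_of_comp (φ : G ≃g G) (c : V → K) (v w : V) (h : Reaches G (c ∘ φ) n v w) :
      Reaches G c n (φ v) (φ w) :=
    let ⟨k, hk, a, ha⟩ := h
    ⟨k, hk, φ a, ha.comp_iso φ⟩
  refine ⟨mpr_of_comp φ c v w, fun h => ?_⟩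
  have := mpr_of_comp φ.symm (c ∘ φ) (φ v) (φ w)
  simp only [Function.comp_def, φ.apply_symm_apply, φ.symm_apply_apply] at this
  exact this h

variable [G.LocallyFinite]

lemma conflicts_comp_iso (φ : G ≃g G) (c : V → K) (w : V) :
    conflicts G (c ∘ φ) w = conflicts G c (φ w) :=
  Finset.sum_equiv φ.toEquiv (by simpa using fun y => φ.map_adj_iff.symm) fun _ _ => rfl

lemma energy_comp_iso (hT : G.IsTree) (φ : G ≃g G) (c : V → K) (v : V) (R : ℕ) :
    energy G (c ∘ φ) v R = energy G c (φ v) R :=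
  Finset.sum_equiv φ.toEquiv (by simp [mem_closedBall hT, dist_iso hT.connected])
    fun w _ => conflicts_comp_iso φ c w

lemma improvable_comp_iso (hT : G.IsTree) (φ : G ≃g G) (c : V → K) (v : V) (R : ℕ) :
    Improvable G (c ∘ φ) v R ↔ Improvable G c (φ v) R := by
  have comp_surjective : Function.Surjective fun g : V → K => g ∘ φ :=
    fun g => ⟨g ∘ φ.symm, funext fun y => congrArg g (φ.symm_apply_apply y)⟩
  rw [Improvable, comp_surjective.exists]
  refine exists_congr fun g => and_congr (φ.toEquiv.forall_congr fun y => ?_) ?_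
  · exact imp_congr (by rw [← dist_iso hT.connected φ]; rfl) Iff.rfl
  · rw [energy_comp_iso hT, energy_comp_iso hT]

lemma active_comp_iso (hT : G.IsTree) (φ : G ≃g G) (R : ℕ) (c : V → K) (p : V → K × Bool) (v : V) :
    Active G R (c ∘ φ) (p ∘ φ) v ↔ Active G R c p (φ v) := by
  have recolourBall_comp : recolourBall G R (c ∘ φ) (fun y => ((p ∘ φ) y).1) v =
      recolourBall G R c (fun y => (p y).1) (φ v) ∘ φ := by
    funext y
    simp only [recolourBall, Function.comp_apply, dist_iso hT.connected]
  refine and_congr Iff.rfl (and_congr (φ.toEquiv.forall_congr fun u => ?_) ?_)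
  · exact imp_congr φ.injective.ne_iff.symm
      (imp_congr (by rw [← dist_iso hT.connected φ]; rfl) Iff.rfl)
  · rw [recolourBall_comp, energy_comp_iso hT, energy_comp_iso hT]

lemma recolour_comp_iso (hT : G.IsTree) (φ : G ≃g G) (R : ℕ) (c : V → K) (p : V → K × Bool) :
    recolour G R (c ∘ φ) (p ∘ φ) = recolour G R c p ∘ φ := by
  classical
  funext y
  refine if_congr (φ.toEquiv.exists_congr fun v => ?_) rfl rfl
  rw [active_comp_iso hT, ← dist_iso hT.connected φ v]
  rfl

lemma collected_comp_iso (hT : G.IsTree) (φ : G ≃g G) (R : ℕ) (c : V → K) (p : V → K × Bool)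
    (g : V → K) (v w : V) :
    collected G R (c ∘ φ) (p ∘ φ) (g ∘ φ) v w = collected G R c p g (φ v) (φ w) := by
  classical
  rw [collected, collected, conflicts_comp_iso]
  exact if_congr (by rw [active_comp_iso hT, dist_iso hT.connected]) rfl rfl

end Equivariance

section Measurability

variable {V K : Type*} {G : SimpleGraph V}

lemma measurable_recolourBall {X : Type*} [MeasurableSpace X] [MeasurableSpace K]
    {c q : X → V → K} (hc : Measurable c) (hq : Measurable q) (R : ℕ) (v : V) :
    Measurable fun x => recolourBall G R (c x) (q x) v := by
  refine measurable_pi_lambda _ fun y => ?_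
  unfold recolourBall
  split_ifs <;> fun_prop

variable [MeasurableSpace K] [MeasurableSingletonClass K] [Countable K]

lemma measurable_colour_eq (v w : V) : Measurable fun c : V → K => c v = c w :=
  (measurable_pi_apply v).eq (measurable_pi_apply w)

lemma measurable_tokenPath [Countable V] (v : V) (k : ℕ) (a b : V) :
    Measurable fun c : V → K => TokenPath G c v k a b := by
  induction k generalizing a b with
  | zero =>
    have start_iff (c : V → K) : TokenPath G c v 0 a b ↔ b = v ∧ G.Adj a v ∧ c a = c v :=
      ⟨by rintro ⟨hadj, hc⟩; exact ⟨rfl, hadj, hc⟩,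
        by rintro ⟨rfl, hadj, hc⟩; exact .start hadj hc⟩
    simp only [start_iff]
    exact measurable_const.and (measurable_const.and (measurable_colour_eq a v))
  | succ k ih =>
    have push_iff (c : V → K) : TokenPath G c v (k + 1) a b ↔
        ∃ x, TokenPath G c v k x a ∧ G.Adj a b ∧ b ≠ x ∧ c b ≠ c a ∧
          ∀ y, G.Adj a y → y ≠ x → c y = c b → y = b :=
      ⟨fun | .push h hadj hne hc huniq => ⟨_, h, hadj, hne, hc, huniq⟩,
        fun ⟨_, h, hadj, hne, hc, huniq⟩ => .push h hadj hne hc huniq⟩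
    simp only [push_iff]
    exact .exists fun x => (ih x a).and <| measurable_const.and <| measurable_const.and <|
      (measurable_colour_eq b a).not.and <| .forall fun y => measurable_const.imp <|
        measurable_const.imp <| (measurable_colour_eq y b).imp measurable_const

lemma measurable_reaches [Countable V] (n : ℕ) (v w : V) :
    Measurable fun c : V → K => Reaches G c n v w :=
  .exists fun k => measurable_const.and <| .exists fun a => measurable_tokenPath v k a w

variable [G.LocallyFinite]

lemma measurable_conflicts (w : V) : Measurable fun c : V → K => conflicts G c w := by
  classical
  exact Finset.measurable_sum _ fun y _ =>
    Measurable.ite (measurable_colour_eq y w).setOf measurable_const measurable_const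

lemma measurable_energy (v : V) (R : ℕ) : Measurable fun c : V → K => energy G c v R :=
  Finset.measurable_sum _ fun w _ => measurable_conflicts w

lemma measurable_improvable (hT : G.IsTree) (v : V) (R : ℕ) :
    Measurable fun c : V → K => Improvable G c v R := by
  classical
  let overwrite (q : closedBall G R v → K) (c : V → K) (y : V) : K :=
    if h : y ∈ closedBall G R v then q ⟨y, h⟩ else c y
  have improvable_iff (c : V → K) :
      Improvable G c v R ↔ ∃ q, energy G (overwrite q c) v R < energy G c v R := by
    refine ⟨fun ⟨g, hg, hlt⟩ => ⟨fun y => g y, ?_⟩, fun ⟨q, hlt⟩ => ⟨overwrite q c, ?_, hlt⟩⟩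
    · have overwrite_eq : overwrite (fun y => g y) c = g := by
        funext y
        by_cases h : y ∈ closedBall G R v
        · exact dif_pos h
        · exact (dif_neg h).trans (hg y (not_le.1 (mt (mem_closedBall hT).2 h))).symm
      rwa [overwrite_eq]
    · exact fun y hy => dif_neg fun h => hy.not_ge ((mem_closedBall hT).1 h)
  have measurable_overwrite (q : closedBall G R v → K) : Measurable (overwrite q) := by
    refine measurable_pi_lambda _ fun y => ?_
    by_cases h : y ∈ closedBall G R v
    · simpa only [overwrite, dif_pos h] using measurable_const
    · simpa only [overwrite, dif_neg h] using measurable_pi_apply y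
  simp only [improvable_iff]
  exact .exists fun q => ((measurable_energy v R).comp (measurable_overwrite q)).lt
    (measurable_energy v R)

lemma measurable_active [Countable V] (R : ℕ) (v : V) :
    Measurable fun x : (V → K) × (V → K × Bool) => Active G R x.1 x.2 v := by
  have candidate (u : V) (i : Bool) :
      Measurable fun x : (V → K) × (V → K × Bool) => (x.2 u).2 = i :=
    Measurable.eq (by fun_prop) measurable_const
  refine (candidate v true).and <| Measurable.and (.forall fun u => measurable_const.imp <|
    measurable_const.imp (candidate u false)) ?_
  exact ((measurable_energy v R).comp
    (measurable_recolourBall measurable_fst (by fun_prop) R v)).lt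
      ((measurable_energy v R).comp measurable_fst)

lemma measurable_recolour [Countable V] (R : ℕ) :
    Measurable fun x : (V → K) × (V → K × Bool) => recolour G R x.1 x.2 := by
  classical
  refine measurable_pi_lambda _ fun y => Measurable.ite ?_ (by fun_prop) (by fun_prop)
  exact (Measurable.exists fun v => (measurable_active R v).and measurable_const).setOf

lemma measurable_collected [Countable V] {g : (V → K) × (V → K × Bool) → V → K}
    (hg : Measurable g) (R : ℕ) (v w : V) :
    Measurable fun x : (V → K) × (V → K × Bool) => collected G R x.1 x.2 (g x) v w := by
  classical
  refine Measurable.ite ((measurable_active R v).and measurable_const).setOf ?_ measurable_const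
  exact measurable_from_top.comp ((measurable_conflicts w).comp hg)

end Measurability

section InvariantMeasures

open scoped ENNReal

variable {V K : Type*} {G : SimpleGraph V}

/-- The measure `Q` on labellings is invariant under all automorphisms of the graph. -/
def IsInvariant {A : Type*} [MeasurableSpace A] (G : SimpleGraph V) (Q : Measure (V → A)) : Prop :=
  ∀ φ : G ≃g G, MeasurePreserving (fun c : V → A => c ∘ φ) Q Q

lemma isInvariant_infinitePi {A : Type*} [MeasurableSpace A] (ν : Measure A)
    [IsProbabilityMeasure ν] : IsInvariant G (Measure.infinitePi fun _ : V => ν) := by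
  intro φ
  refine ⟨by fun_prop, ?_⟩
  convert Measure.infinitePi_map_piCongrLeft (fun _ : V => ν) φ.symm.toEquiv using 2
  funext c y
  rw [MeasurableEquiv.coe_piCongrLeft, Equiv.piCongrLeft_apply, eq_rec_constant]
  rfl

lemma nonempty_equiv_neighborSet [G.LocallyFinite] {d : ℕ} (hreg : G.IsRegularOfDegree d) (v : V) :
    Nonempty (Fin d ≃ G.neighborSet v) :=
  ⟨(Fintype.equivFinOfCardEq ((G.card_neighborSet_eq_degree v).trans (hreg v))).symm⟩

lemma lintegral_tsum_eq_lintegral_tsum_swap [Countable V] [G.LocallyFinite] {d : ℕ}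
    (hT : G.IsTree) (hreg : G.IsRegularOfDegree d) {X : Type*} [MeasurableSpace X] {P : Measure X}
    {τ : (G ≃g G) → X → X} (hτ : ∀ φ, MeasurePreserving (τ φ) P P) {m : V → V → X → ℝ≥0∞}
    (hm : ∀ u v, Measurable (m u v)) (hmτ : ∀ φ u v x, m u v (τ φ x) = m (φ u) (φ v) x) (o : V) :
    ∫⁻ x, ∑' w, m o w x ∂P = ∫⁻ x, ∑' w, m w o x ∂P := by
  rw [lintegral_tsum fun w => (hm o w).aemeasurable, lintegral_tsum fun w => (hm w o).aemeasurable]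
  refine tsum_eq_tsum_swap_of_invariant hT (nonempty_equiv_neighborSet hreg)
    (fun u v => ∫⁻ x, m u v x ∂P) (fun φ u v => ?_) o
  rw [← (hτ φ).lintegral_comp (hm u v)]
  exact lintegral_congr fun x => (hmτ φ u v x).symm

end InvariantMeasures

section StuckVertices

open scoped ENNReal

variable {V K : Type*} {G : SimpleGraph V} [G.LocallyFinite]

/-- The vertex `v` is in conflict, but no recolouring of the ball of radius `R` around it lowers
the energy. -/
def Stuck (G : SimpleGraph V) [G.LocallyFinite] (c : V → K) (v : V) (R : ℕ) : Prop :=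
  0 < conflicts G c v ∧ ¬ Improvable G c v R

open Classical in
/-- Mass transport in which every stuck vertex sends mass one to each vertex its tokens reach in at
most `n` steps. -/
noncomputable def tokenMass (G : SimpleGraph V) [G.LocallyFinite] (n : ℕ) (v w : V) (c : V → K) :
    ℝ≥0∞ :=
  if Stuck G c v (3 * n) ∧ Reaches G c n v w then 1 else 0

lemma tokenMass_comp_iso (hT : G.IsTree) (n : ℕ) (φ : G ≃g G) (v w : V) (c : V → K) :
    tokenMass G n v w (c ∘ φ) = tokenMass G n (φ v) (φ w) c := by
  classical
  refine if_congr ?_ rfl rfl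
  rw [reaches_comp_iso, Stuck, Stuck, conflicts_comp_iso, improvable_comp_iso hT]

lemma add_one_le_tsum_tokenMass [Fintype K] (hT : G.IsTree)
    (hK : ∀ v, G.degree v + 2 ≤ 2 * Fintype.card K) {n : ℕ} {c : V → K} {v : V}
    (hv : Stuck G c v (3 * n)) :
    ((n + 1 : ℕ) : ℝ≥0∞) ≤ ∑' w, tokenMass G n v w c := by
  classical
  refine le_trans ?_ (ENNReal.sum_le_tsum (closedBall G n v))
  simp only [tokenMass, hv, true_and, Finset.sum_boole]
  exact_mod_cast lt_card_reaches hT hK hv.2 hv.1 (by omega)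

lemma tsum_tokenMass_swap_le_one [Fintype K] (hT : G.IsTree)
    (hK : ∀ v, G.degree v + 2 ≤ 2 * Fintype.card K) (n : ℕ) (c : V → K) (w : V) :
    ∑' v, tokenMass G n v w c ≤ 1 := by
  by_cases h : ∃ v, Stuck G c v (3 * n) ∧ Reaches G c n v w
  · obtain ⟨v, hv, hvw⟩ := h
    have other (v' : V) (hne : v' ≠ v) : tokenMass G n v' w c = 0 :=
      if_neg fun h' => hne (hvw.source_unique hT hK hv.2 h'.2).symm
    rw [tsum_eq_single v other]
    exact (if_pos ⟨hv, hvw⟩).le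
  · push Not at h
    have none_sends (v : V) : tokenMass G n v w c = 0 := if_neg fun hv => h v hv.1 hv.2
    exact (ENNReal.tsum_eq_zero.2 none_sends).trans_le zero_le_one

variable [MeasurableSpace K] [MeasurableSingletonClass K]

lemma measurable_stuck [Countable K] (hT : G.IsTree) (v : V) (R : ℕ) :
    Measurable fun c : V → K => Stuck G c v R :=
  (measurable_const.lt (measurable_conflicts v)).and (measurable_improvable hT v R).not

lemma measurable_tokenMass [Countable V] [Countable K] (hT : G.IsTree) (n : ℕ) (v w : V) :
    Measurable (tokenMass G n v w : (V → K) → ℝ≥0∞) := by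
  classical
  exact Measurable.ite ((measurable_stuck hT v _).and (measurable_reaches n v w)).setOf
    measurable_const measurable_const

lemma measure_stuck_le [Countable V] [Fintype K] (hT : G.IsTree) {d : ℕ}
    (hreg : G.IsRegularOfDegree d) (hK : d + 2 ≤ 2 * Fintype.card K) {Q : Measure (V → K)}
    [IsProbabilityMeasure Q] (hQ : IsInvariant G Q) (o : V) (n : ℕ) :
    Q {c | Stuck G c o (3 * n)} ≤ ((n + 1 : ℕ) : ℝ≥0∞)⁻¹ := by
  have hdeg (v : V) : G.degree v + 2 ≤ 2 * Fintype.card K := by rwa [hreg v]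
  rw [ENNReal.le_inv_iff_mul_le, mul_comm]
  calc ((n + 1 : ℕ) : ℝ≥0∞) * Q {c | Stuck G c o (3 * n)}
      = ∫⁻ _ in {c | Stuck G c o (3 * n)}, ((n + 1 : ℕ) : ℝ≥0∞) ∂Q := by
        rw [setLIntegral_const]
    _ ≤ ∫⁻ c in {c | Stuck G c o (3 * n)}, ∑' w, tokenMass G n o w c ∂Q :=
        setLIntegral_mono' (measurable_stuck hT o _).setOf fun _ =>
          add_one_le_tsum_tokenMass hT hdeg
    _ ≤ ∫⁻ c, ∑' w, tokenMass G n o w c ∂Q := setLIntegral_le_lintegral _ _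
    _ = ∫⁻ c, ∑' w, tokenMass G n w o c ∂Q :=
        lintegral_tsum_eq_lintegral_tsum_swap hT hreg hQ (measurable_tokenMass hT n)
          (tokenMass_comp_iso hT n) o
    _ ≤ ∫⁻ _, 1 ∂Q := lintegral_mono fun c => tsum_tokenMass_swap_le_one hT hdeg n c o
    _ = 1 := by rw [lintegral_one, measure_univ]

end StuckVertices

section Improvement

open scoped ENNReal

variable {V K : Type*} {G : SimpleGraph V} [G.LocallyFinite]

lemma active_of_forall_eq [DecidableEq V] {R : ℕ} {c g : V → K} {p : V → K × Bool} {v : V}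
    (hg : ∀ y, R < G.dist v y → g y = c y) (hlt : energy G g v R < energy G c v R)
    (hp : ∀ y, G.dist v y ≤ 2 * R + 3 → p y = (g y, decide (y = v))) : Active G R c p v := by
  have recolourBall_eq : recolourBall G R c (fun y => (p y).1) v = g := by
    funext y
    by_cases hy : G.dist v y ≤ R
    · rw [recolourBall, if_pos hy, hp y (by omega)]
    · rw [recolourBall, if_neg hy, hg y (not_le.1 hy)]
  refine ⟨?_, fun u hu hd => ?_, by rwa [recolourBall_eq]⟩
  · rw [hp v (by simp)]
    exact decide_eq_true rfl
  · rw [hp u hd]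
    exact decide_eq_false hu

lemma lintegral_conflicts_le_degree {X : Type*} [MeasurableSpace X] {P : Measure X}
    [IsProbabilityMeasure P] (c : X → V → K) (o : V) :
    ∫⁻ x, conflicts G (c x) o ∂P ≤ G.degree o :=
  (lintegral_mono fun x => Nat.cast_le.2 (colourCount_le_degree (c x) o (c x o))).trans (by simp)

variable [MeasurableSpace K] [MeasurableSingletonClass K] {ρ : Measure (K × Bool)}
  [IsProbabilityMeasure ρ]

lemma pow_card_le_measure_active (hT : G.IsTree) {r : ℝ≥0∞} (hρ : ∀ a, r ≤ ρ {a}) {R : ℕ}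
    {c : V → K} {v : V} (hc : Improvable G c v R) :
    r ^ (closedBall G (2 * R + 3) v).card ≤
      Measure.infinitePi (fun _ : V => ρ) {p | Active G R c p v} := by
  classical
  obtain ⟨g, hg, hlt⟩ := hc
  calc r ^ (closedBall G (2 * R + 3) v).card
      ≤ ∏ y ∈ closedBall G (2 * R + 3) v, ρ {(g y, decide (y = v))} :=
        Finset.pow_card_le_prod _ _ _ fun y _ => hρ _
    _ = Measure.infinitePi (fun _ : V => ρ)
          (Set.pi (closedBall G (2 * R + 3) v) fun y => {(g y, decide (y = v))}) :=
        (Measure.infinitePi_pi _ fun y _ => measurableSet_singleton _).symm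
    _ ≤ _ := measure_mono fun p hp => active_of_forall_eq hg hlt fun y hy =>
        hp y (Finset.mem_coe.2 ((mem_closedBall hT).2 hy))

variable [Countable V] [Countable K] {Q : Measure (V → K)}

lemma mul_measure_improvable_le [SFinite Q] (hT : G.IsTree) {r : ℝ≥0∞} (hρ : ∀ a, r ≤ ρ {a})
    (R : ℕ) (v : V) :
    r ^ (closedBall G (2 * R + 3) v).card * Q {c | Improvable G c v R} ≤
      Q.prod (Measure.infinitePi fun _ : V => ρ) {x | Active G R x.1 x.2 v} := by
  rw [Measure.prod_apply (measurable_active R v).setOf, ← setLIntegral_const]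
  exact (setLIntegral_mono' (measurable_improvable hT v R).setOf fun c hc =>
    pow_card_le_measure_active hT hρ hc).trans (setLIntegral_le_lintegral _ _)

variable [IsProbabilityMeasure Q]

lemma lintegral_tsum_collected_swap (hT : G.IsTree) {d : ℕ} (hreg : G.IsRegularOfDegree d)
    (hQ : IsInvariant G Q) (R : ℕ) {g : (V → K) × (V → K × Bool) → V → K} (hg : Measurable g)
    (hgφ : ∀ (φ : G ≃g G) c p, g (c ∘ φ, p ∘ φ) = g (c, p) ∘ φ) (o : V) :
    ∫⁻ x, ∑' w, collected G R x.1 x.2 (g x) o w ∂Q.prod (Measure.infinitePi fun _ : V => ρ) =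
      ∫⁻ x, ∑' v, collected G R x.1 x.2 (g x) v o ∂Q.prod (Measure.infinitePi fun _ : V => ρ) :=
  lintegral_tsum_eq_lintegral_tsum_swap hT hreg
    (fun φ => (hQ φ).prod (isInvariant_infinitePi ρ φ)) (measurable_collected hg R)
    (fun φ u v x => by
      rw [Prod.map_fst, Prod.map_snd, ← collected_comp_iso hT φ, ← hgφ]
      rfl) o

lemma lintegral_tsum_collected_recolour_add_le (hT : G.IsTree) {d : ℕ}
    (hreg : G.IsRegularOfDegree d) (hQ : IsInvariant G Q) (R : ℕ) (o : V) :
    ∫⁻ x, ∑' v, collected G R x.1 x.2 (recolour G R x.1 x.2) v o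
          ∂Q.prod (Measure.infinitePi fun _ : V => ρ) +
        Q.prod (Measure.infinitePi fun _ : V => ρ) {x | Active G R x.1 x.2 o} ≤
      ∫⁻ x, ∑' v, collected G R x.1 x.2 x.1 v o ∂Q.prod (Measure.infinitePi fun _ : V => ρ) := by
  classical
  have meas_active := (measurable_active (G := G) (K := K) R o).setOf
  rw [← lintegral_tsum_collected_swap hT hreg hQ R measurable_fst (fun _ _ _ => rfl) o,
    ← lintegral_tsum_collected_swap hT hreg hQ R (measurable_recolour R)
      (fun φ c p => recolour_comp_iso hT φ R c p) o,
    ← lintegral_indicator_one meas_active,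
    ← lintegral_add_right _ (measurable_one.indicator meas_active)]
  exact lintegral_mono fun x => tsum_collected_recolour_add_le hT R x.1 x.2 o

lemma lintegral_conflicts_recolour_add_le (hT : G.IsTree) {d : ℕ} (hreg : G.IsRegularOfDegree d)
    (hQ : IsInvariant G Q) (R : ℕ) (o : V) :
    ∫⁻ x, conflicts G (recolour G R x.1 x.2) o ∂Q.prod (Measure.infinitePi fun _ : V => ρ) +
        Q.prod (Measure.infinitePi fun _ : V => ρ) {x | Active G R x.1 x.2 o} ≤
      ∫⁻ c, conflicts G c o ∂Q := by
  set M := Q.prod (Measure.infinitePi fun _ : V => ρ)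
  have meas_incoming {g : (V → K) × (V → K × Bool) → V → K} (hg : Measurable g) :
      Measurable fun x => ∑' v, collected G R x.1 x.2 (g x) v o :=
    .tsum fun v => measurable_collected hg R v o
  have conflicts_old :
      ∫⁻ x, conflicts G x.1 o ∂M = ∫⁻ c, conflicts G c o ∂Q :=
    measurePreserving_fst.lintegral_comp (measurable_from_top.comp (measurable_conflicts o))
  have balance :
      ∫⁻ x, conflicts G (recolour G R x.1 x.2) o ∂M +
          ∫⁻ x, ∑' v, collected G R x.1 x.2 x.1 v o ∂M =
        ∫⁻ c, conflicts G c o ∂Q +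
          ∫⁻ x, ∑' v, collected G R x.1 x.2 (recolour G R x.1 x.2) v o ∂M := by
    rw [← lintegral_add_right _ (meas_incoming measurable_fst), ← conflicts_old,
      ← lintegral_add_right _ (meas_incoming (measurable_recolour R))]
    exact lintegral_congr fun x => conflicts_recolour_add_tsum_collected hT R x.1 x.2 o
  have finite : ∫⁻ x, ∑' v, collected G R x.1 x.2 x.1 v o ∂M ≠ ⊤ := by
    refine ne_top_of_le_ne_top (ENNReal.natCast_ne_top (G.degree o)) ?_
    calc ∫⁻ x, ∑' v, collected G R x.1 x.2 x.1 v o ∂M ≤ ∫⁻ x, conflicts G x.1 o ∂M :=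
          lintegral_mono fun x => tsum_collected_swap_le hT.connected R x.1 x.2 x.1 o
      _ = ∫⁻ c, conflicts G c o ∂Q := conflicts_old
      _ ≤ G.degree o := lintegral_conflicts_le_degree id o
  refine ENNReal.le_of_add_le_add_right finite ?_
  rw [add_right_comm, balance, add_assoc]
  gcongr
  exact lintegral_tsum_collected_recolour_add_le hT hreg hQ R o

end Improvement

section SplittingNoise

lemma measurePreserving_arrowProdEquivProdArrow_infinitePi {ι A B : Type*} [MeasurableSpace A]
    [MeasurableSpace B] (α : ι → Measure A) (β : ι → Measure B) [∀ i, IsProbabilityMeasure (α i)]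
    [∀ i, IsProbabilityMeasure (β i)] :
    MeasurePreserving (MeasurableEquiv.arrowProdEquivProdArrow A B ι)
      (Measure.infinitePi fun i => (α i).prod (β i))
      ((Measure.infinitePi α).prod (Measure.infinitePi β)) := by
  refine MeasurePreserving.symm (MeasurableEquiv.arrowProdEquivProdArrow A B ι).symm
    ⟨MeasurableEquiv.measurable _, ?_⟩
  refine IsProjectiveLimit.unique (fun I => ?_)
    (Measure.isProjectiveLimit_infinitePi fun i => (α i).prod (β i))
  have zip_restrict : I.restrict ∘ (MeasurableEquiv.arrowProdEquivProdArrow A B ι).symm =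
      (MeasurableEquiv.arrowProdEquivProdArrow A B I).symm ∘ Prod.map I.restrict I.restrict := rfl
  rw [Measure.map_map (Finset.measurable_restrict I) (MeasurableEquiv.measurable _), zip_restrict,
    ← Measure.map_map (MeasurableEquiv.measurable _) (by fun_prop),
    ← Measure.map_prod_map _ _ (Finset.measurable_restrict I) (Finset.measurable_restrict I),
    Measure.infinitePi_map_restrict, Measure.infinitePi_map_restrict]
  exact (measurePreserving_arrowProdEquivProdArrow A B I (fun i => α i) fun i => β i).symm.map_eq

lemma measurePreserving_splitNoise {ι Ω A B : Type*} [MeasurableSpace Ω] [MeasurableSpace A]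
    [MeasurableSpace B] {ν : Measure Ω} {α : Measure A} {β : Measure B} [IsProbabilityMeasure ν]
    [IsProbabilityMeasure α] [IsProbabilityMeasure β] {t : Ω → A × B}
    (ht : MeasurePreserving t ν (α.prod β)) :
    MeasurePreserving (fun x : ι → Ω => (fun i => (t (x i)).1, fun i => (t (x i)).2))
      (Measure.infinitePi fun _ : ι => ν)
      ((Measure.infinitePi fun _ : ι => α).prod (Measure.infinitePi fun _ : ι => β)) := by
  refine (measurePreserving_arrowProdEquivProdArrow_infinitePi (fun _ => α) fun _ => β).comp
    (g := MeasurableEquiv.arrowProdEquivProdArrow A B ι) (f := fun (x : ι → Ω) i => t (x i)) ?_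
  refine ⟨measurable_pi_lambda _ fun i => ht.measurable.comp (measurable_pi_apply i), ?_⟩
  rw [Measure.infinitePi_map_pi _ fun _ => ht.measurable]
  simp only [ht.map_eq]

end SplittingNoise

section FactorsOfIid

open scoped ENNReal

variable {V Ω : Type*} [MeasurableSpace Ω] {G : SimpleGraph V}

/-- `f` is a factor map: measurable and equivariant under the automorphisms of `G`, so that it turns
iid labels into an fiid labelling. -/
structure IsFactor {A : Type*} [MeasurableSpace A] (G : SimpleGraph V) (f : (V → Ω) → V → A) :
    Prop where
  measurable : Measurable f
  map_comp_iso (φ : G ≃g G) (x : V → Ω) : f (x ∘ φ) = f x ∘ φ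

variable {ν : Measure Ω} [IsProbabilityMeasure ν]

lemma IsFactor.isInvariant_map {A : Type*} [MeasurableSpace A] {f : (V → Ω) → V → A}
    (hf : IsFactor G f) : IsInvariant G ((Measure.infinitePi fun _ : V => ν).map f) := fun φ =>
  (hf.measurable.measurePreserving _).of_semiconj (isInvariant_infinitePi ν φ)
    (hf.map_comp_iso φ) (by fun_prop)

variable [G.LocallyFinite] {K : Type*} [MeasurableSpace K] [MeasurableSingletonClass K]
  [Countable K] {f : (V → Ω) → V → K}

lemma IsFactor.measure_conflicts_pos_eq (hf : IsFactor G f) (φ : G ≃g G) (v : V) :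
    Measure.infinitePi (fun _ : V => ν) {x | 0 < conflicts G (f x) (φ v)} =
      Measure.infinitePi (fun _ : V => ν) {x | 0 < conflicts G (f x) v} := by
  have meas_pos : MeasurableSet {x | 0 < conflicts G (f x) v} :=
    (measurable_const.lt ((measurable_conflicts v).comp hf.measurable)).setOf
  rw [← (isInvariant_infinitePi ν φ).measure_preimage meas_pos.nullMeasurableSet]
  simp only [Set.preimage_ofPred_eq, hf.map_comp_iso, conflicts_comp_iso]

/-- One round of local recolouring applied to the colouring `f`, where `t` splits the label of each
vertex into a label for `f` and a proposal. -/
noncomputable def improve (G : SimpleGraph V) [G.LocallyFinite] (R : ℕ) (t : Ω → Ω × (K × Bool))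
    (f : (V → Ω) → V → K) (x : V → Ω) : V → K :=
  recolour G R (f fun v => (t (x v)).1) fun v => (t (x v)).2

/-- The expected number of conflicts at `o` in the colouring `f` of iid labels with law `ν`. -/
noncomputable def expectedConflicts (G : SimpleGraph V) [G.LocallyFinite] (ν : Measure Ω)
    (f : (V → Ω) → V → K) (o : V) : ℝ≥0∞ :=
  ∫⁻ x, conflicts G (f x) o ∂Measure.infinitePi (fun _ : V => ν)

variable [Countable V] {t : Ω → Ω × (K × Bool)}

lemma IsFactor.improve (hf : IsFactor G f) (hT : G.IsTree) (ht : Measurable t) (R : ℕ) :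
    IsFactor G (improve G R t f) where
  measurable := (measurable_recolour R).comp
    ((hf.measurable.comp (by fun_prop)).prodMk (by fun_prop))
  map_comp_iso φ x := by
    rw [TreeColouring.improve, TreeColouring.improve, ← recolour_comp_iso hT, ← hf.map_comp_iso]
    rfl

variable {ρ : Measure (K × Bool)} [IsProbabilityMeasure ρ] {r : ℝ≥0∞} {d : ℕ}

lemma IsFactor.expectedConflicts_improve_add_le (hf : IsFactor G f) (hT : G.IsTree)
    (hreg : G.IsRegularOfDegree d) (hρ : ∀ a, r ≤ ρ {a}) (ht : MeasurePreserving t ν (ν.prod ρ))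
    (R : ℕ) (o : V) :
    expectedConflicts G ν (TreeColouring.improve G R t f) o +
        r ^ (closedBall G (2 * R + 3) o).card *
          Measure.infinitePi (fun _ : V => ν) {x | Improvable G (f x) o R} ≤
      expectedConflicts G ν f o := by
  set P := Measure.infinitePi fun _ : V => ν
  have law : MeasurePreserving f P (P.map f) := hf.measurable.measurePreserving P
  have law_prob : IsProbabilityMeasure (P.map f) :=
    Measure.isProbabilityMeasure_map hf.measurable.aemeasurable
  have law_split : MeasurePreserving
      (fun x : V → Ω => (f fun v => (t (x v)).1, fun v => (t (x v)).2)) P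
      ((P.map f).prod (Measure.infinitePi fun _ : V => ρ)) :=
    (law.prod (.id _)).comp (measurePreserving_splitNoise ht)
  have conflicts_improve : expectedConflicts G ν (TreeColouring.improve G R t f) o =
      ∫⁻ y, conflicts G (recolour G R y.1 y.2) o
        ∂(P.map f).prod (Measure.infinitePi fun _ : V => ρ) :=
    law_split.lintegral_comp (f := fun y => (conflicts G (recolour G R y.1 y.2) o : ℝ≥0∞))
      (measurable_from_top.comp ((measurable_conflicts o).comp (measurable_recolour R)))
  have conflicts_law : expectedConflicts G ν f o = ∫⁻ c, conflicts G c o ∂P.map f :=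
    law.lintegral_comp (measurable_from_top.comp (measurable_conflicts o))
  have improvable_law : P {x | Improvable G (f x) o R} = P.map f {c | Improvable G c o R} :=
    (Measure.map_apply hf.measurable (measurable_improvable hT o R).setOf).symm
  rw [conflicts_improve, conflicts_law, improvable_law]
  refine le_trans ?_ (lintegral_conflicts_recolour_add_le (ρ := ρ) hT hreg hf.isInvariant_map R o)
  gcongr
  exact mul_measure_improvable_le hT hρ R o

end FactorsOfIid

section FewConflicts

open scoped ENNReal

variable {V Ω K : Type*} {G : SimpleGraph V} [G.LocallyFinite] [Countable V]
  [MeasurableSpace K] [MeasurableSingletonClass K] [MeasurableSpace Ω] {ν : Measure Ω}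
  [IsProbabilityMeasure ν] {d : ℕ}

lemma IsFactor.measure_conflicts_pos_le [Fintype K] {f : (V → Ω) → V → K} (hf : IsFactor G f)
    (hT : G.IsTree) (hreg : G.IsRegularOfDegree d) (hK : d + 2 ≤ 2 * Fintype.card K) (o : V)
    (n : ℕ) :
    Measure.infinitePi (fun _ : V => ν) {x | 0 < conflicts G (f x) o} ≤
      Measure.infinitePi (fun _ : V => ν) {x | Improvable G (f x) o (3 * n)} +
        ((n + 1 : ℕ) : ℝ≥0∞)⁻¹ := by
  set P := Measure.infinitePi fun _ : V => ν
  have law_prob : IsProbabilityMeasure (P.map f) :=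
    Measure.isProbabilityMeasure_map hf.measurable.aemeasurable
  calc P {x | 0 < conflicts G (f x) o}
      ≤ P ({x | Improvable G (f x) o (3 * n)} ∪ f ⁻¹' {c | Stuck G c o (3 * n)}) :=
        measure_mono fun x hx => or_iff_not_imp_left.2 fun h => ⟨hx, h⟩
    _ ≤ P {x | Improvable G (f x) o (3 * n)} + P (f ⁻¹' {c | Stuck G c o (3 * n)}) :=
        measure_union_le _ _
    _ ≤ P {x | Improvable G (f x) o (3 * n)} + ((n + 1 : ℕ) : ℝ≥0∞)⁻¹ := by
        rw [← Measure.map_apply hf.measurable (measurable_stuck hT o _).setOf]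
        gcongr
        exact measure_stuck_le hT hreg hK hf.isInvariant_map o n

variable {ρ : Measure (K × Bool)} [IsProbabilityMeasure ρ] {r : ℝ≥0∞} {t : Ω → Ω × (K × Bool)}

lemma exists_isFactor_measure_improvable_le [Countable K] [Nonempty K] (hT : G.IsTree)
    (hreg : G.IsRegularOfDegree d) (hr : r ≠ 0) (hρ : ∀ a, r ≤ ρ {a})
    (ht : MeasurePreserving t ν (ν.prod ρ)) {ε : ℝ≥0∞} (hε : ε ≠ 0) (R : ℕ) (o : V) :
    ∃ f : (V → Ω) → V → K, IsFactor G f ∧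
      Measure.infinitePi (fun _ : V => ν) {x | Improvable G (f x) o R} ≤ ε := by
  let κ := r ^ (closedBall G (2 * R + 3) o).card
  let least := ⨅ f : {f : (V → Ω) → V → K // IsFactor G f}, expectedConflicts G ν f.1 o
  have least_le (f : (V → Ω) → V → K) (hf : IsFactor G f) : least ≤ expectedConflicts G ν f o :=
    iInf_le (fun f : {f : (V → Ω) → V → K // IsFactor G f} => expectedConflicts G ν f.1 o) ⟨f, hf⟩
  have least_ne_top : least ≠ ⊤ :=
    ne_top_of_le_ne_top (ENNReal.natCast_ne_top (G.degree o)) <|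
      (least_le (fun _ _ => Classical.arbitrary K) ⟨measurable_const, fun _ _ => rfl⟩).trans
        (lintegral_conflicts_le_degree _ o)
  obtain ⟨⟨f, hf⟩, near_least⟩ := iInf_lt_iff.1 <|
    ENNReal.lt_add_right least_ne_top (mul_ne_zero (pow_ne_zero _ hr) hε : κ * ε ≠ 0)
  refine ⟨f, hf, ?_⟩
  suffices κ * Measure.infinitePi (fun _ : V => ν) {x | Improvable G (f x) o R} < κ * ε from
    (lt_of_mul_lt_mul_left' this).le
  refine lt_of_add_lt_add_left (a := expectedConflicts G ν (improve G R t f) o) ?_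
  calc expectedConflicts G ν (improve G R t f) o +
          κ * Measure.infinitePi (fun _ : V => ν) {x | Improvable G (f x) o R}
      ≤ expectedConflicts G ν f o := hf.expectedConflicts_improve_add_le hT hreg hρ ht R o
    _ < least + κ * ε := near_least
    _ ≤ expectedConflicts G ν (improve G R t f) o + κ * ε := by
        gcongr
        exact least_le _ (hf.improve hT ht.measurable R)

lemma exists_isFactor_measure_conflicts_pos_le [Fintype K] (hT : G.IsTree)
    (hreg : G.IsRegularOfDegree d) (hK : d + 2 ≤ 2 * Fintype.card K) (hr : r ≠ 0)
    (hρ : ∀ a, r ≤ ρ {a}) (ht : MeasurePreserving t ν (ν.prod ρ)) {ε : ℝ≥0∞} (hε : ε ≠ 0)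
    (o : V) :
    ∃ f : (V → Ω) → V → K, IsFactor G f ∧
      Measure.infinitePi (fun _ : V => ν) {x | 0 < conflicts G (f x) o} ≤ ε := by
  have : Nonempty K := Fintype.card_pos_iff.1 (by omega)
  have half_ne_zero : ε / 2 ≠ 0 := (ENNReal.half_pos hε).ne'
  obtain ⟨n, hn⟩ := ENNReal.exists_inv_nat_lt half_ne_zero
  obtain ⟨f, hf, few_improvable⟩ :=
    exists_isFactor_measure_improvable_le hT hreg hr hρ ht half_ne_zero (3 * n) o
  refine ⟨f, hf, (hf.measure_conflicts_pos_le hT hreg hK o n).trans ?_⟩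
  have few_stuck : ((n + 1 : ℕ) : ℝ≥0∞)⁻¹ ≤ ε / 2 :=
    (ENNReal.inv_le_inv.2 (Nat.cast_le.2 n.le_succ)).trans hn.le
  exact (add_le_add few_improvable few_stuck).trans_eq (ENNReal.add_halves ε)

end FewConflicts

section UnitInterval

open scoped ENNReal

instance isProbabilityMeasure_restrict_Icc :
    IsProbabilityMeasure (volume.restrict (Set.Icc (0 : ℝ) 1)) := ⟨by simp⟩

lemma exists_measurePreserving_unitInterval {Y : Type*} [MeasurableSpace Y] [StandardBorelSpace Y]
    [Nonempty Y] (ν : Measure Y) [IsProbabilityMeasure ν] :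
    ∃ t : ℝ → Y, MeasurePreserving t (volume.restrict (Set.Icc 0 1)) ν := by
  obtain ⟨g, hg, hgν⟩ := ν.exists_measurable_map_eq
  have proj_coe : Set.projIcc (0 : ℝ) 1 zero_le_one ∘ Subtype.val = id :=
    funext (Set.projIcc_val zero_le_one)
  have proj_preserving : MeasurePreserving (Set.projIcc (0 : ℝ) 1 zero_le_one)
      (volume.restrict (Set.Icc 0 1)) volume := by
    rw [← unitInterval.measurePreserving_coe.map_eq]
    exact .map_of_comp (proj_coe ▸ .id _) continuous_projIcc.measurable measurable_subtype_coe
  exact ⟨_, (MeasurePreserving.mk hg hgν).comp proj_preserving⟩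

lemma exists_isProbabilityMeasure_forall_le_singleton (K : Type*) [Finite K] [Nonempty K]
    [MeasurableSpace K] [MeasurableSingletonClass K] :
    ∃ (ρ : Measure K) (r : ℝ≥0∞), IsProbabilityMeasure ρ ∧ r ≠ 0 ∧ ∀ a, r ≤ ρ {a} := by
  cases nonempty_fintype K
  refine ⟨(PMF.uniformOfFintype K).toMeasure, (Fintype.card K : ℝ≥0∞)⁻¹, inferInstance,
    ENNReal.inv_ne_zero.2 (ENNReal.natCast_ne_top _), fun a => ?_⟩
  rw [PMF.toMeasure_apply_singleton _ _ (measurableSet_singleton a), PMF.uniformOfFintype_apply]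

end UnitInterval

section RedLabelling

variable {V : Type*} {G : SimpleGraph V} [G.LocallyFinite] {q : ℕ}

/-- The colouring `c` with every vertex in conflict relabelled by the extra label `Fin.last q`. -/
noncomputable def redLabelling (G : SimpleGraph V) [G.LocallyFinite] (c : V → Fin q) (v : V) :
    Fin (q + 1) :=
  if 0 < conflicts G c v then Fin.last q else (c v).castSucc

lemma redLabelling_eq_last_iff {c : V → Fin q} {v : V} :
    redLabelling G c v = Fin.last q ↔ 0 < conflicts G c v := by
  rw [redLabelling]
  split_ifs with h
  · exact iff_of_true rfl h
  · exact iff_of_false (Fin.castSucc_ne_last _) h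

lemma redLabelling_ne_of_adj {c : V → Fin q} {u v : V} (huv : G.Adj u v)
    (hv : redLabelling G c v ≠ Fin.last q) : redLabelling G c u ≠ redLabelling G c v := by
  intro heq
  have hu : redLabelling G c u ≠ Fin.last q := heq ▸ hv
  rw [ne_eq, redLabelling_eq_last_iff] at hu hv
  rw [redLabelling, redLabelling, if_neg hu, if_neg hv] at heq
  exact hv (colourCount_pos_iff.2 ⟨u, huv.symm, Fin.castSucc_injective q heq⟩)

lemma redLabelling_comp_iso (φ : G ≃g G) (c : V → Fin q) :
    redLabelling G (c ∘ φ) = redLabelling G c ∘ φ := by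
  funext v
  simp only [redLabelling, conflicts_comp_iso, Function.comp_apply]

lemma measurable_redLabelling : Measurable (redLabelling G : (V → Fin q) → V → Fin (q + 1)) :=
  measurable_pi_lambda _ fun v =>
    .ite (measurable_const.lt (measurable_conflicts v)).setOf measurable_const
      (measurable_from_top.comp (measurable_pi_apply v))

lemma IsFactor.redLabelling {Ω : Type*} [MeasurableSpace Ω] {f : (V → Ω) → V → Fin q}
    (hf : IsFactor G f) : IsFactor G fun x => redLabelling G (f x) where
  measurable := measurable_redLabelling.comp hf.measurable
  map_comp_iso φ x := by rw [hf.map_comp_iso, redLabelling_comp_iso]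

end RedLabelling

lemma exists_isFactor_redLabelling {V : Type*} [Countable V] {G : SimpleGraph V}
    [G.LocallyFinite] (hT : G.IsTree) {d q : ℕ} (hreg : G.IsRegularOfDegree d)
    (hdq : d + 2 ≤ 2 * q) {ε : ENNReal} (hε : ε ≠ 0) :
    ∃ f : (V → ℝ) → V → Fin q, IsFactor G f ∧ ∀ v,
      Measure.infinitePi (fun _ : V => volume.restrict (Set.Icc (0 : ℝ) 1))
        {x | redLabelling G (f x) v = Fin.last q} ≤ ε := by
  obtain ⟨o⟩ := hT.connected.nonempty
  have : Nonempty (Fin q) := ⟨⟨0, by omega⟩⟩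
  obtain ⟨ρ, r, hρ, hr, hle⟩ :=
    exists_isProbabilityMeasure_forall_le_singleton (Fin q × Bool)
  obtain ⟨t, ht⟩ := exists_measurePreserving_unitInterval
    ((volume.restrict (Set.Icc (0 : ℝ) 1)).prod ρ)
  obtain ⟨f, hf, hfε⟩ := exists_isFactor_measure_conflicts_pos_le hT hreg (by simpa using hdq)
    hr hle ht hε o
  obtain ⟨Φ, hΦ, -⟩ := exists_simplyTransitive_isos hT (nonempty_equiv_neighborSet hreg) o
  refine ⟨f, hf, fun v => ?_⟩
  simp only [redLabelling_eq_last_iff]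
  rw [← hΦ v, hf.measure_conflicts_pos_eq]
  exact hfε

lemma exists_locallyFinite_isRegularOfDegree {V : Type*} {G : SimpleGraph V} {d : ℕ} (hd : d ≠ 0)
    (hreg : ∀ v, (G.neighborSet v).ncard = d) :
    ∃ _ : G.LocallyFinite, G.IsRegularOfDegree d := by
  have : G.LocallyFinite := fun v => (Set.finite_of_ncard_ne_zero (by rwa [hreg v])).fintype
  refine ⟨this, fun v => ?_⟩
  rw [← hreg v, ← SimpleGraph.card_neighborSet_eq_degree, Set.fintypeCard_eq_ncard]

end TreeColouring

theorem fiid_red_labelling_of_T6_general {V : Type*} [Countable V] {G : SimpleGraph V}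
    [G.LocallyFinite] (hT : G.IsTree) {d q : ℕ} (hreg : G.IsRegularOfDegree d)
    (hdq : d + 2 ≤ 2 * q) {μ : Measure (V → ℝ)}
    (hμ : ∀ s : Finset V,
      Measure.map (fun (x : V → ℝ) (v : s) => x v) μ
        = Measure.pi (fun _ : s => volume.restrict (Set.Icc (0:ℝ) 1)))
    {ε : ENNReal} (hε : ε ≠ 0) :
    ∃ f : (V → ℝ) → (V → Fin (q + 1)),
      Measurable f ∧
      (∀ (φ : G ≃g G) (x : V → ℝ) (v : V),
        f (fun u => x (φ.symm u)) v = f x (φ.symm v)) ∧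
      (∀ x u v, G.Adj u v → f x v ≠ Fin.last q → f x u ≠ f x v) ∧
      (∀ v : V, μ {x | f x v = Fin.last q} ≤ ε) := by
  obtain rfl : μ = Measure.infinitePi fun _ => volume.restrict (Set.Icc (0 : ℝ) 1) :=
    IsProjectiveLimit.unique hμ (Measure.isProjectiveLimit_infinitePi _)
  obtain ⟨f, hf, rare_red⟩ := TreeColouring.exists_isFactor_redLabelling hT hreg hdq hε
  exact ⟨_, hf.redLabelling.measurable,
    fun φ x => congrFun (hf.redLabelling.map_comp_iso φ.symm x),
    fun x u v huv => TreeColouring.redLabelling_ne_of_adj huv, rare_red⟩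

/-- For every ε > 0, the 6-regular tree admits an fiid labelling with 5 labels which is
a.e. proper (at each non-red vertex) and assigns the label 4 to a given vertex with probability at most ε. -/
theorem fiid_red_labelling_of_T6
    (V : Type) [Countable V] [Infinite V]
    (G : SimpleGraph V) (hconn : G.Connected) (hacyc : G.IsAcyclic)
    (hreg : ∀ v : V, (G.neighborSet v).ncard = 6)
    (μ : Measure (V → ℝ)) [IsProbabilityMeasure μ]
    (hμ : ∀ s : Finset V,
      Measure.map (fun (x : V → ℝ) (v : s) => x v) μ
        = Measure.pi (fun _ : s => volume.restrict (Set.Icc (0:ℝ) 1)))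
    (ε : ℝ) (hε : 0 < ε) :
    ∃ f : (V → ℝ) → (V → Fin 5),
      Measurable f ∧
      (∀ (φ : G ≃g G) (x : V → ℝ) (v : V),
        f (fun u => x (φ.symm u)) v = f x (φ.symm v)) ∧
      (∀ᵐ x ∂μ, ∀ u v : V, G.Adj u v → f x v ≠ 4 → f x u ≠ f x v) ∧
      (∀ v : V, μ {x | f x v = 4} ≤ ENNReal.ofReal ε) := by
  obtain ⟨_, hreg⟩ := TreeColouring.exists_locallyFinite_isRegularOfDegree (by decide) hreg
  obtain ⟨f, hf, equivariant, proper, rare_red⟩ := fiid_red_labelling_of_T6_general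
    ⟨hconn, hacyc⟩ hreg (q := 4) (by decide) hμ (ENNReal.ofReal_pos.2 hε).ne'
  exact ⟨f, hf, equivariant, .of_forall proper, rare_red⟩
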